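/- Let l > 0, 0 ≤ s ≤ T, and let u : [0,l] × [s,T] → ℝ be continuously differentiable with u(x,s) = 0 for all x ∈ [0,l]. Then ∫ₛᵀ ∫₀ˡ u(x,t)² dx dt ≤ 24 T² ∫ₛᵀ ∫₀ˡ u_t(x,t)² dx dt. -/

import Mathlib

/-!
The time derivative of a `C¹` function on the closed rectangle extends continuously to the boundary,
so for each fixed `x` the fundamental theorem of calculus gives `u(x,t) = ∫ₛᵗ u_t(x,τ) dτ`.
By Cauchy–Schwarz, `u(x,t)² ≤ (T - s) ∫ₛᵀ u_t(x,τ)² dτ` (`sq_le_mul_integral_sq_of_hasDerivAt`).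
Integrating over the rectangle and exchanging the order of integration yields the inequality with
constant `(T - s)² ≤ T²`, which is stronger than the claimed `24 T²`.

To have integrability for free, `u` and its time derivative are composed with the projection of the
plane onto the rectangle; this gives functions that are continuous on all of `ℝ²`.
-/

open MeasureTheory

/-- Cauchy–Schwarz against the constant function `1`. -/
lemma sq_integral_le_mul_integral_sq {a b : ℝ} (hab : a ≤ b) {G : ℝ → ℝ} (hG : Continuous G) :
    (∫ τ in a..b, G τ) ^ 2 ≤ (b - a) * ∫ τ in a..b, (G τ) ^ 2 := by
  rcases hab.eq_or_lt with rfl | hlt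
  · simp
  -- The variance of `G` about its mean `c` is nonnegative.
  set c : ℝ := (∫ τ in a..b, G τ) / (b - a) with hc
  have hL : 0 < b - a := sub_pos.2 hlt
  have h0 : 0 ≤ ∫ τ in a..b, (G τ - c) ^ 2 :=
    intervalIntegral.integral_nonneg hab fun τ _ => sq_nonneg _
  have h1 : ∫ τ in a..b, (G τ - c) ^ 2
      = (∫ τ in a..b, (G τ) ^ 2) - 2 * c * (∫ τ in a..b, G τ) + (b - a) * c ^ 2 := by
    have e : ∀ τ, (G τ - c) ^ 2 = ((G τ) ^ 2 - 2 * c * G τ) + c ^ 2 := fun τ => by ring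
    simp_rw [e]
    rw [intervalIntegral.integral_add, intervalIntegral.integral_sub,
      intervalIntegral.integral_const_mul, intervalIntegral.integral_const, smul_eq_mul]
    all_goals exact Continuous.intervalIntegrable (by fun_prop) _ _
  have h2 : (∫ τ in a..b, G τ) = c * (b - a) := by
    rw [hc]; field_simp
  rw [h1, h2] at h0
  rw [h2]
  nlinarith [mul_nonneg hL.le h0]

/-- The pointwise estimate: a function vanishing at `a` is bounded on `[a, b]` by the `L²` norm
of its derivative. -/
lemma sq_le_mul_integral_sq_of_hasDerivAt {a b : ℝ} {f G : ℝ → ℝ} (hG : Continuous G)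
    (hf : ContinuousOn f (Set.Icc a b)) (hd : ∀ t ∈ Set.Ioo a b, HasDerivAt f (G t) t)
    (h0 : f a = 0) {t : ℝ} (ht : t ∈ Set.Icc a b) :
    (f t) ^ 2 ≤ (b - a) * ∫ τ in a..b, (G τ) ^ 2 := by
  have hft : ∫ τ in a..t, G τ = f t := by
    rw [intervalIntegral.integral_eq_sub_of_hasDerivAt_of_le ht.1
      (hf.mono (Set.Icc_subset_Icc_right ht.2))
      (fun x hx => hd x ⟨hx.1, hx.2.trans_le ht.2⟩) (hG.intervalIntegrable _ _), h0, sub_zero]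
  have hmono : ∫ τ in a..t, (G τ) ^ 2 ≤ ∫ τ in a..b, (G τ) ^ 2 :=
    intervalIntegral.integral_mono_interval le_rfl ht.1 ht.2
      (Filter.Eventually.of_forall fun τ => sq_nonneg _)
      ((hG.pow 2).intervalIntegrable _ _)
  have hnn : 0 ≤ ∫ τ in a..t, (G τ) ^ 2 :=
    intervalIntegral.integral_nonneg ht.1 fun τ _ => sq_nonneg _
  rw [← hft]
  refine (sq_integral_le_mul_integral_sq ht.1 hG).trans ?_
  exact mul_le_mul (by linarith [ht.2]) hmono hnn (by linarith [ht.1, ht.2])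

/-- Poincaré-type inequality `‖u‖²_{L²(Q_s)} ≤ 24T²‖u_t‖²_{L²(Q_s)}` on the subdomain
`Q_s = (0,l) × (s,T)`: if `u` is `C¹` on `[0,l] × [s,T]` and vanishes at the initial
time `t = s`, then `∫ₛᵀ∫₀ˡ u² ≤ 24T² ∫ₛᵀ∫₀ˡ u_t²`. -/
theorem stmt_10 (l s T : ℝ) (hl : 0 < l) (hs : 0 ≤ s) (hsT : s ≤ T) (u : ℝ → ℝ → ℝ)
    (hu : ContDiffOn ℝ 1 (Function.uncurry u) (Set.Icc 0 l ×ˢ Set.Icc s T))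
    (hu0 : ∀ x ∈ Set.Icc (0:ℝ) l, u x s = 0) :
    (∫ t in s..T, ∫ x in (0:ℝ)..l, (u x t) ^ 2) ≤
      24 * T ^ 2 * ∫ t in s..T, ∫ x in (0:ℝ)..l, (deriv (u x) t) ^ 2 := by
  rcases hsT.eq_or_lt with rfl | hlt
  · simp
  set K : Set (ℝ × ℝ) := Set.Icc 0 l ×ˢ Set.Icc s T with hK
  have hKu : UniqueDiffOn ℝ K := (uniqueDiffOn_Icc hl).prod (uniqueDiffOn_Icc hlt)
  -- The projection of the plane onto the rectangle.
  let P : ℝ × ℝ → ℝ × ℝ := fun p => (Set.projIcc 0 l hl.le p.1, Set.projIcc s T hsT p.2)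
  have hPc : Continuous P := by
    refine Continuous.prodMk ?_ ?_
    · exact continuous_subtype_val.comp (continuous_projIcc.comp continuous_fst)
    · exact continuous_subtype_val.comp (continuous_projIcc.comp continuous_snd)
  have hPK : ∀ p, P p ∈ K := fun p => ⟨(Set.projIcc 0 l hl.le p.1).2, (Set.projIcc s T hsT p.2).2⟩
  have hPid : ∀ x ∈ Set.Icc 0 l, ∀ t ∈ Set.Icc s T, P (x, t) = (x, t) := by
    intro x hx t ht
    simp [P, Set.projIcc_of_mem _ hx, Set.projIcc_of_mem _ ht]
  let U : ℝ × ℝ → ℝ := fun p => Function.uncurry u (P p)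
  let G : ℝ × ℝ → ℝ := fun p => fderivWithin ℝ (Function.uncurry u) K (P p) (0, 1)
  have hU : Continuous U := hu.continuousOn.comp_continuous hPc hPK
  have hG : Continuous G :=
    ((hu.continuousOn_fderivWithin hKu le_rfl).comp_continuous hPc hPK).clm_apply continuous_const
  have hUu : ∀ x ∈ Set.Icc 0 l, ∀ t ∈ Set.Icc s T, U (x, t) = u x t := by
    intro x hx t ht
    simp only [U, hPid x hx t ht, Function.uncurry]
  have hderiv : ∀ x ∈ Set.Icc 0 l, ∀ t ∈ Set.Ioo s T, HasDerivAt (u x) (G (x, t)) t := by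
    intro x hx t ht
    have ht' := Set.Ioo_subset_Icc_self ht
    have h1 := (hu.differentiableOn one_ne_zero (x, t) ⟨hx, ht'⟩).hasFDerivWithinAt
    have h2 : HasDerivWithinAt (fun τ : ℝ => (x, τ)) ((0 : ℝ), (1 : ℝ)) (Set.Icc s T) t :=
      ((hasDerivAt_const t x).prodMk (hasDerivAt_id t)).hasDerivWithinAt
    have h3 := h1.comp_hasDerivWithinAt t h2 (fun τ hτ => ⟨hx, hτ⟩)
    have h4 := h3.hasDerivAt (Icc_mem_nhds ht.1 ht.2)
    simp only [G, hPid x hx t ht']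
    exact h4
  have hLHS : (∫ t in s..T, ∫ x in (0:ℝ)..l, (u x t) ^ 2)
      = ∫ t in s..T, ∫ x in (0:ℝ)..l, (U (x, t)) ^ 2 := by
    refine intervalIntegral.integral_congr_Ioo_of_le hsT fun t ht => ?_
    refine intervalIntegral.integral_congr_Ioo_of_le hl.le fun x hx => ?_
    simp only [hUu x (Set.Ioo_subset_Icc_self hx) t (Set.Ioo_subset_Icc_self ht)]
  -- `deriv (u x)` may be junk at the end times `s` and `T`, which form a null set.
  have hRHS : (∫ t in s..T, ∫ x in (0:ℝ)..l, (deriv (u x) t) ^ 2)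
      = ∫ t in s..T, ∫ x in (0:ℝ)..l, (G (x, t)) ^ 2 := by
    refine intervalIntegral.integral_congr_Ioo_of_le hsT fun t ht => ?_
    refine intervalIntegral.integral_congr_Ioo_of_le hl.le fun x hx => ?_
    simp only [(hderiv x (Set.Ioo_subset_Icc_self hx) t ht).deriv]
  have hpt : ∀ x ∈ Set.Icc 0 l, ∀ t ∈ Set.Icc s T,
      (U (x, t)) ^ 2 ≤ (T - s) * ∫ τ in s..T, (G (x, τ)) ^ 2 := by
    intro x hx t ht
    rw [hUu x hx t ht]
    refine sq_le_mul_integral_sq_of_hasDerivAt (f := u x) (G := fun τ => G (x, τ))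
      (by fun_prop) ?_ (hderiv x hx) (hu0 x hx) ht
    exact hu.continuousOn.comp (f := fun τ : ℝ => (x, τ)) (by fun_prop) fun τ hτ => ⟨hx, hτ⟩
  have hGx : Continuous fun x => ∫ τ in s..T, (G (x, τ)) ^ 2 :=
    intervalIntegral.continuous_parametric_intervalIntegral_of_continuous'
      (f := fun x τ => (G (x, τ)) ^ 2) (by fun_prop) s T
  have hUt : Continuous fun t => ∫ x in (0:ℝ)..l, (U (x, t)) ^ 2 :=
    intervalIntegral.continuous_parametric_intervalIntegral_of_continuous'
      (f := fun t x => (U (x, t)) ^ 2) (by fun_prop) 0 l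
  have hswap : (∫ x in (0:ℝ)..l, ∫ t in s..T, (G (x, t)) ^ 2)
      = ∫ t in s..T, ∫ x in (0:ℝ)..l, (G (x, t)) ^ 2 := by
    refine intervalIntegral_intervalIntegral_swap (F := fun x t => (G (x, t)) ^ 2) ?_
    refine ((hG.pow 2).continuousOn.integrableOn_compact
      (isCompact_uIcc.prod isCompact_uIcc)).mono_set
      (Set.prod_mono Set.uIoc_subset_uIcc Set.uIoc_subset_uIcc)
  have hnn : 0 ≤ ∫ t in s..T, ∫ x in (0:ℝ)..l, (G (x, t)) ^ 2 :=
    intervalIntegral.integral_nonneg hsT fun t _ =>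
      intervalIntegral.integral_nonneg hl.le fun x _ => sq_nonneg _
  rw [hLHS, hRHS]
  calc (∫ t in s..T, ∫ x in (0:ℝ)..l, (U (x, t)) ^ 2)
      ≤ ∫ _t in s..T, ∫ x in (0:ℝ)..l, (T - s) * ∫ τ in s..T, (G (x, τ)) ^ 2 := by
        refine intervalIntegral.integral_mono_on hsT (hUt.intervalIntegrable _ _)
          (continuous_const.intervalIntegrable _ _) fun t ht => ?_
        exact intervalIntegral.integral_mono_on hl.le
          (Continuous.intervalIntegrable (by fun_prop) _ _)
          ((continuous_const.mul hGx).intervalIntegrable _ _) fun x hx => hpt x hx t ht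
    _ = (T - s) ^ 2 * ∫ t in s..T, ∫ x in (0:ℝ)..l, (G (x, t)) ^ 2 := by
        rw [intervalIntegral.integral_const, intervalIntegral.integral_const_mul, hswap,
          smul_eq_mul]
        ring
    _ ≤ 24 * T ^ 2 * ∫ t in s..T, ∫ x in (0:ℝ)..l, (G (x, t)) ^ 2 := by
        refine mul_le_mul_of_nonneg_right ?_ hnn
        nlinarith [mul_nonneg hs (sub_nonneg.2 hsT), sq_nonneg T, mul_nonneg hs hs]
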